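/- Let (Ω, F, P) be a probability space and let ρ : Ω → ℝ be measurable with ρ > 0 P-almost everywhere, ρ integrable, and log ρ integrable. If a measurable ξ : Ω → ℝ satisfies ξ > 0 P-almost everywhere, log ξ integrable, ξ·ρ integrable, ∫ ξ·ρ dP = 1, and attains the maximal value ∫ log ξ dP = −∫ log ρ dP, then ξ = ρ⁻¹ P-almost everywhere. (Uniqueness of the log-optimal terminal wealth in Theorem 1.) -/

import Mathlib

/-!
For `x > 0` we have `log x ≤ x - 1`, with equality only at `x = 1`. Apply this to `x = ξ ρ`: the
budget constraint gives `∫ (ξ ρ - 1) = 0`, and optimality gives `∫ log (ξ ρ) = 0`. Two ordered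
functions with the same integral agree a.e., so `ξ ρ = 1` a.e.
-/

open MeasureTheory

theorem log_eq_sub_one_iff_of_pos {x : ℝ} (hx : 0 < x) : Real.log x = x - 1 ↔ x = 1 := by
  refine ⟨fun h => ?_, fun h => by simp [h]⟩
  by_contra hne
  exact (Real.log_lt_sub_one_of_pos hx hne).ne h

section

variable {Ω : Type*} [MeasurableSpace Ω] {μ : Measure Ω} {f g : Ω → ℝ}

theorem ae_eq_one_of_integral_sub_one_le_integral_log (hf_pos : ∀ᵐ ω ∂μ, 0 < f ω)
    (hf_int : Integrable (fun ω => f ω - 1) μ)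
    (hlog_int : Integrable (fun ω => Real.log (f ω)) μ)
    (hle : ∫ ω, (f ω - 1) ∂μ ≤ ∫ ω, Real.log (f ω) ∂μ) :
    f =ᵐ[μ] 1 := by
  have hlog_le : (fun ω => Real.log (f ω)) ≤ᵐ[μ] fun ω => f ω - 1 :=
    hf_pos.mono fun _ => Real.log_le_sub_one_of_pos
  have hlog_eq : (fun ω => Real.log (f ω)) =ᵐ[μ] fun ω => f ω - 1 :=
    (integral_eq_iff_of_ae_le hlog_int hf_int hlog_le).mp
      (le_antisymm (integral_mono_ae hlog_int hf_int hlog_le) hle)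
  filter_upwards [hf_pos, hlog_eq] with ω hpos heq
  exact (log_eq_sub_one_iff_of_pos hpos).mp heq

theorem log_mul_ae_eq_add (hf : ∀ᵐ ω ∂μ, f ω ≠ 0) (hg : ∀ᵐ ω ∂μ, g ω ≠ 0) :
    (fun ω => Real.log (f ω * g ω)) =ᵐ[μ] fun ω => Real.log (f ω) + Real.log (g ω) := by
  filter_upwards [hf, hg] with ω hfω hgω using Real.log_mul hfω hgω

end

/-- The budget constraint is imposed on the excess `ξ ρ - 1`, which can be integrable over an
infinite measure space although neither `ξ ρ` nor `1` is. -/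
theorem log_utility_max_unique_general {Ω : Type*} [MeasurableSpace Ω] (μ : Measure Ω)
    (ρ : Ω → ℝ) (hρ_pos : ∀ᵐ ω ∂μ, 0 < ρ ω)
    (hlogρ_int : Integrable (fun ω => Real.log (ρ ω)) μ)
    (ξ : Ω → ℝ) (hξ_pos : ∀ᵐ ω ∂μ, 0 < ξ ω)
    (hlogξ_int : Integrable (fun ω => Real.log (ξ ω)) μ)
    (hexcess_int : Integrable (fun ω => ξ ω * ρ ω - 1) μ)
    (hbudget : ∫ ω, (ξ ω * ρ ω - 1) ∂μ ≤ 0)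
    (hopt : -∫ ω, Real.log (ρ ω) ∂μ ≤ ∫ ω, Real.log (ξ ω) ∂μ) :
    ξ =ᵐ[μ] fun ω => (ρ ω)⁻¹ := by
  have hlog_mul := log_mul_ae_eq_add (hξ_pos.mono fun _ => ne_of_gt)
    (hρ_pos.mono fun _ => ne_of_gt)
  have hlog_nonneg : 0 ≤ ∫ ω, Real.log (ξ ω * ρ ω) ∂μ := by
    rw [integral_congr_ae hlog_mul, integral_add hlogξ_int hlogρ_int]
    linarith
  have hmul_pos : ∀ᵐ ω ∂μ, 0 < ξ ω * ρ ω := by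
    filter_upwards [hξ_pos, hρ_pos] with ω hξ hρ using mul_pos hξ hρ
  have hmul_eq_one : (fun ω => ξ ω * ρ ω) =ᵐ[μ] 1 :=
    ae_eq_one_of_integral_sub_one_le_integral_log hmul_pos hexcess_int
      ((hlogξ_int.add hlogρ_int).congr hlog_mul.symm) (hbudget.trans hlog_nonneg)
  exact hmul_eq_one.mono fun _ => eq_inv_of_mul_eq_one_left

/-- Uniqueness of the log-optimal terminal wealth (Theorem 1): a budget-feasible
terminal wealth `ξ` attaining the maximal expected log utility `−∫ log ρ dP`
must equal `ρ⁻¹` almost everywhere. -/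
theorem log_utility_max_unique {Ω : Type*} [MeasurableSpace Ω] (P : Measure Ω)
    [IsProbabilityMeasure P] (ρ : Ω → ℝ) (hρ_meas : Measurable ρ)
    (hρ_pos : ∀ᵐ ω ∂P, 0 < ρ ω) (hρ_int : Integrable ρ P)
    (hlogρ_int : Integrable (fun ω => Real.log (ρ ω)) P)
    (ξ : Ω → ℝ) (hξ_meas : Measurable ξ) (hξ_pos : ∀ᵐ ω ∂P, 0 < ξ ω)
    (hlogξ_int : Integrable (fun ω => Real.log (ξ ω)) P)
    (hξρ_int : Integrable (fun ω => ξ ω * ρ ω) P)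
    (hbudget : (∫ ω, ξ ω * ρ ω ∂P) = 1)
    (hopt : (∫ ω, Real.log (ξ ω) ∂P) = -∫ ω, Real.log (ρ ω) ∂P) :
    ξ =ᵐ[P] fun ω => (ρ ω)⁻¹ :=
  log_utility_max_unique_general P ρ hρ_pos hlogρ_int ξ hξ_pos hlogξ_int
    (hξρ_int.sub (integrable_const 1)) (by simp [integral_sub hξρ_int, hbudget]) hopt.ge
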